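/- arXiv:0807.0805 — 2 statements merged into one kernel-verified Lean document; each statement's English description precedes it below -/
import Mathlib

section
/- Let V be a real vector space, J : V → V a linear map with J ∘ J = −id_V, C ⊆ V a linear subspace, and J_Y : C → C a linear map with J_Y ∘ J_Y = −id_C. Then the set H := { v − J(J_Y v) : v ∈ C } is a linear subspace of V which is invariant under J (i.e. J(H) = H). Moreover, if C is J-invariant and J_Y coincides with the restriction of J to C, then H = C. -/
/-!
The map `φ v = f v - J (f (K v))` is twice the complex-linear part of `f`, so `J ∘ φ = φ ∘ K`.
Since `K` is surjective, `J` maps the range of `φ` onto itself. If `f` is already complex linear,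
then `φ = 2 f`, which has the same range as `f`.
-/

theorem surjective_of_apply_apply_eq_neg {α : Type*} [InvolutiveNeg α] {g : α → α}
    (hg : ∀ x, g (g x) = -x) : Function.Surjective g :=
  fun x => ⟨g (-x), by rw [hg, neg_neg]⟩

theorem range_nsmul_of_isUnit {R V W : Type*} [Semiring R] [AddCommMonoid V] [Module R V]
    [AddCommMonoid W] [Module R W] {n : ℕ} (hn : IsUnit (n : R)) (f : W →ₗ[R] V) :
    LinearMap.range (n • f) = LinearMap.range f := by
  apply le_antisymm
  · rintro _ ⟨v, rfl⟩
    exact ⟨n • v, map_nsmul f n v⟩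
  · rintro _ ⟨v, rfl⟩
    obtain ⟨r, hr⟩ := hn.exists_right_inv
    have nsmul_smul_cancel : n • r • v = v := by
      rw [← Nat.cast_smul_eq_nsmul R, smul_smul, hr, one_smul]
    exact ⟨r • v, by rw [LinearMap.smul_apply, ← map_nsmul, nsmul_smul_cancel]⟩

section HorizontalMap

variable {R V W : Type*} [Ring R] [AddCommGroup V] [Module R V] [AddCommGroup W] [Module R W]

/-- The map `v ↦ f v - J (f (K v))`: twice the complex-linear part of `f` when `J` and `K` are
complex structures. When `f` is the inclusion of `C = (ker d_xπ_Y)^⊥` into `V = T_xU_Y` and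
`K = J_Y`, its range is the horizontal subspace `T_xU_Y^h`. As in the paper, there is no
normalising factor `1/2`. -/
def horizontalMap (J : V →ₗ[R] V) (K : W →ₗ[R] W) (f : W →ₗ[R] V) : W →ₗ[R] V :=
  f - J ∘ₗ f ∘ₗ K

variable {J : V →ₗ[R] V} {K : W →ₗ[R] W}

theorem horizontalMap_apply (f : W →ₗ[R] V) (v : W) :
    horizontalMap J K f v = f v - J (f (K v)) :=
  rfl

theorem comp_horizontalMap (hJ : ∀ v, J (J v) = -v) (hK : ∀ v, K (K v) = -v) (f : W →ₗ[R] V) :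
    J ∘ₗ horizontalMap J K f = horizontalMap J K f ∘ₗ K := by
  ext v
  calc
    J (f v - J (f (K v))) = J (f v) + f (K v) := by rw [map_sub, hJ, sub_neg_eq_add]
    _ = f (K v) - J (f (K (K v))) := by rw [hK, map_neg, map_neg, sub_neg_eq_add, add_comm]

theorem map_range_horizontalMap (hJ : ∀ v, J (J v) = -v) (hK : ∀ v, K (K v) = -v)
    (f : W →ₗ[R] V) :
    (LinearMap.range (horizontalMap J K f)).map J = LinearMap.range (horizontalMap J K f) := by
  have hK_range : LinearMap.range K = ⊤ :=
    LinearMap.range_eq_top.mpr (surjective_of_apply_apply_eq_neg hK)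
  rw [← LinearMap.range_comp, comp_horizontalMap hJ hK,
    LinearMap.range_comp_of_range_eq_top _ hK_range]

theorem horizontalMap_eq_two_nsmul (hJ : ∀ v, J (J v) = -v) {f : W →ₗ[R] V}
    (hf : ∀ v, f (K v) = J (f v)) : horizontalMap J K f = 2 • f := by
  ext v
  rw [horizontalMap_apply, hf, hJ, sub_neg_eq_add, LinearMap.smul_apply, two_nsmul]

theorem horizontal_subspace_complex_invariant_general [Invertible (2 : R)]
    (hJ : ∀ v, J (J v) = -v) (hK : ∀ v, K (K v) = -v) (f : W →ₗ[R] V) :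
    ∃ H : Submodule R V,
      (H : Set V) = {w | ∃ v, w = f v - J (f (K v))} ∧
      H.map J = H ∧
      ((∀ v, f (K v) = J (f v)) → H = LinearMap.range f) := by
  refine ⟨LinearMap.range (horizontalMap J K f), ?_, map_range_horizontalMap hJ hK f, ?_⟩
  · ext w
    exact exists_congr fun v => eq_comm
  · intro hf
    have two_isUnit : IsUnit ((2 : ℕ) : R) := mod_cast isUnit_of_invertible (2 : R)
    rw [horizontalMap_eq_two_nsmul hJ hf, range_nsmul_of_isUnit two_isUnit]

end HorizontalMap

/-- Let `V` be a real vector space, `J : V → V` linear with `J ∘ J = -id`,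
`C ⊆ V` a subspace, and `J_Y : C → C` linear with `J_Y ∘ J_Y = -id`.  Then
`H = { v - J (J_Y v) : v ∈ C }` is a linear subspace of `V` invariant under `J`
(`J(H) = H`); moreover, if `C` is `J`-invariant and `J_Y` is the restriction of
`J` to `C`, then `H = C`. -/
theorem horizontal_subspace_complex_invariant
    (V : Type*) [AddCommGroup V] [Module ℝ V]
    (J : V →ₗ[ℝ] V) (hJ : ∀ v : V, J (J v) = -v)
    (C : Submodule ℝ V)
    (JY : C →ₗ[ℝ] C) (hJY : ∀ v : C, JY (JY v) = -v) :
    ∃ H : Submodule ℝ V,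
      (H : Set V) = {w : V | ∃ v : C, w = (v : V) - J ((JY v : V))} ∧
      Submodule.map J H = H ∧
      ((∀ v : C, J (v : V) ∈ C) → (∀ v : C, ((JY v : V)) = J (v : V)) → H = C) := by
  obtain ⟨H, hH, hJH, hHC⟩ := horizontal_subspace_complex_invariant_general hJ hJY C.subtype
  exact ⟨H, hH, hJH, fun _ hres => (hHC hres).trans C.range_subtype⟩
end

section
/- Let V be a finite-dimensional real normed vector space equipped with a linear complex structure J_h : V → V (J_h ∘ J_h = −id), and let W be a finite-dimensional complex normed vector space with complex scalar multiplication by i. Let J : W → End_ℝ(V × W) be a map that is differentiable at 0 and satisfies J(w) ∘ J(w) = −id for every w ∈ W, with J(0)(v, w') = (J_h v, i·w'). For u ∈ W, define B_u : V → W by B_u v = pr_W( (DJ(0)(u)) (v, 0) ), where DJ(0) is the derivative of J at 0 and pr_W is the projection V × W → W. Then: (i) B_u(J_h v) = −i·B_u(v) for all v ∈ V (B_u is complex antilinear), and (ii) the real-linear endomorphism J̃_u of V × W given by J̃_u(v, w') = (J_h v, B_u v + i·w') satisfies J̃_u ∘ J̃_u = −id. -/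
open Complex

/-!
Differentiating `J(w)² = -id` at `w = 0` in the direction `u` shows that `DJ(0)(u)` anticommutes
with `J(0)`. Since `J(0)` is block diagonal with blocks `J_h` and `i`, the `V → W` block of this
identity reads `i B_u + B_u J_h = 0`, which is antilinearity of `B_u`. The same expression is the
only off-diagonal block of `J̃_u²`, so `J̃_u² = -id` follows.
-/

open Topology

section Blocks

section Semiring

variable {R V W : Type*} [Semiring R]
  [AddCommMonoid V] [TopologicalSpace V] [Module R V]
  [AddCommMonoid W] [TopologicalSpace W] [Module R W]

/-- The block `V → W` of an endomorphism of `V × W`, written `J^{vh}` in the paper. -/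
def lowerLeftBlock (T : V × W →L[R] V × W) : V →L[R] W :=
  .snd R V W ∘L T ∘L .inl R V W

@[simp]
theorem lowerLeftBlock_apply (T : V × W →L[R] V × W) (v : V) :
    lowerLeftBlock T v = (T (v, 0)).2 :=
  rfl

variable [ContinuousAdd W]

/-- The endomorphism of `V × W` with block matrix `!![A, 0; B, D]`. The limit structure `J̃_u` is
the case `A = J_h`, `B = B_u`, `D = i`. -/
def lowerTriangular (A : V →L[R] V) (B : V →L[R] W) (D : W →L[R] W) : V × W →L[R] V × W :=
  (A ∘L .fst R V W).prod (B.coprod D)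

@[simp]
theorem lowerTriangular_apply (A : V →L[R] V) (B : V →L[R] W) (D : W →L[R] W) (p : V × W) :
    lowerTriangular A B D p = (A p.1, B p.1 + D p.2) :=
  rfl

theorem lowerTriangular_zero (A : V →L[R] V) (D : W →L[R] W) :
    lowerTriangular A 0 D = A.prodMap D := by
  ext <;> simp

theorem lowerTriangular_inj {A A' : V →L[R] V} {B B' : V →L[R] W} {D D' : W →L[R] W} :
    lowerTriangular A B D = lowerTriangular A' B' D' ↔ A = A' ∧ B = B' ∧ D = D' := by
  refine ⟨fun h => ⟨?_, ?_, ?_⟩, by rintro ⟨rfl, rfl, rfl⟩; rfl⟩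
  · ext v
    simpa using congr(($h (v, 0)).1)
  · ext v
    simpa using congr(($h (v, 0)).2)
  · ext w
    simpa using congr(($h (0, w)).2)

theorem lowerTriangular_comp (A A' : V →L[R] V) (B B' : V →L[R] W) (D D' : W →L[R] W) :
    lowerTriangular A B D ∘L lowerTriangular A' B' D' =
      lowerTriangular (A ∘L A') (B ∘L A' + D ∘L B') (D ∘L D') := by
  ext <;> simp

end Semiring

variable {R V W : Type*} [Ring R]
  [AddCommGroup V] [TopologicalSpace V] [IsTopologicalAddGroup V] [Module R V]
  [AddCommGroup W] [TopologicalSpace W] [IsTopologicalAddGroup W] [Module R W]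

theorem lowerTriangular_mul_self_eq_neg_one_iff
    {A : V →L[R] V} {B : V →L[R] W} {D : W →L[R] W} :
    lowerTriangular A B D * lowerTriangular A B D = -1 ↔
      A * A = -1 ∧ B ∘L A + D ∘L B = 0 ∧ D * D = -1 := by
  have neg_one_eq : (-1 : V × W →L[R] V × W) = lowerTriangular (-1) 0 (-1) := by
    ext <;> simp
  rw [neg_one_eq, ContinuousLinearMap.mul_def, lowerTriangular_comp, lowerTriangular_inj]
  rfl

theorem lowerLeftBlock_anticomm_of_prodMap_anticomm
    {A : V →L[R] V} {D : W →L[R] W} {T : V × W →L[R] V × W}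
    (h : A.prodMap D * T + T * A.prodMap D = 0) :
    lowerLeftBlock T ∘L A + D ∘L lowerLeftBlock T = 0 := by
  ext v
  simpa [add_comm] using congr(($h (v, 0)).2)

end Blocks

section NormalDerivative

variable {𝕜 E : Type*} [NontriviallyNormedField 𝕜] [NormedAddCommGroup E] [NormedSpace 𝕜 E]

theorem hasFDerivAt_anticomm_of_mul_self_eventually_eq_const
    {𝔸 : Type*} [NormedRing 𝔸] [NormedAlgebra 𝕜 𝔸]
    {J : E → 𝔸} {J' : E →L[𝕜] 𝔸} {x : E} {c : 𝔸}
    (hJ : HasFDerivAt J J' x) (hc : ∀ᶠ w in 𝓝 x, J w * J w = c) (u : E) :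
    J x * J' u + J' u * J x = 0 := by
  have hconst : HasFDerivAt (fun w => J w * J w) (0 : E →L[𝕜] 𝔸) x :=
    (hasFDerivAt_const c x).congr_of_eventuallyEq hc
  simpa using congr($((hJ.mul' hJ).unique hconst) u)

variable {V W : Type*} [NormedAddCommGroup V] [NormedSpace 𝕜 V]
  [NormedAddCommGroup W] [NormedSpace 𝕜 W]

theorem rescaled_limit_is_almost_complex_general
    {Jh : V →L[𝕜] V} {Jv : W →L[𝕜] W}
    {J : E → (V × W →L[𝕜] V × W)} {J' : E →L[𝕜] (V × W →L[𝕜] V × W)} {x : E}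
    (hJ : HasFDerivAt J J' x) (hsq : ∀ᶠ w in 𝓝 x, J w * J w = -1)
    (hx : J x = Jh.prodMap Jv) (u : E) :
    lowerLeftBlock (J' u) ∘L Jh = -(Jv ∘L lowerLeftBlock (J' u)) ∧
      lowerTriangular Jh (lowerLeftBlock (J' u)) Jv *
        lowerTriangular Jh (lowerLeftBlock (J' u)) Jv = -1 := by
  have hanti : lowerLeftBlock (J' u) ∘L Jh + Jv ∘L lowerLeftBlock (J' u) = 0 := by
    apply lowerLeftBlock_anticomm_of_prodMap_anticomm
    rw [← hx]
    exact hasFDerivAt_anticomm_of_mul_self_eventually_eq_const hJ hsq u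
  have hsqx : lowerTriangular Jh 0 Jv * lowerTriangular Jh 0 Jv = -1 := by
    rw [lowerTriangular_zero, ← hx]
    exact hsq.self_of_nhds
  obtain ⟨hJh, -, hJv⟩ := lowerTriangular_mul_self_eq_neg_one_iff.mp hsqx
  exact ⟨eq_neg_of_add_eq_zero_left hanti,
    lowerTriangular_mul_self_eq_neg_one_iff.mpr ⟨hJh, hanti, hJv⟩⟩

end NormalDerivative

/-- Linear-algebra core of the rescaling limit in the proof of Proposition 3.2:
if `J : W → End_ℝ(V × W)` is differentiable at `0`, satisfies `J(w)² = -id` for all `w`,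
and `J(0)(v, w') = (J_h v, i w')`, then the normal derivative
`B_u v = pr_W (DJ(0)(u)(v, 0))` is complex antilinear in the sense
`B_u (J_h v) = - i • B_u v`, and the limit structure
`J̃_u (v, w') = (J_h v, B_u v + i w')` squares to `-id`. -/
theorem rescaled_limit_is_almost_complex
    (V W : Type*)
    [NormedAddCommGroup V] [NormedSpace ℝ V] [FiniteDimensional ℝ V]
    [NormedAddCommGroup W] [NormedSpace ℂ W] [FiniteDimensional ℂ W]
    (Jh : V →L[ℝ] V) (hJh : ∀ v : V, Jh (Jh v) = -v)
    (J : W → ((V × W) →L[ℝ] (V × W)))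
    (hdiff : DifferentiableAt ℝ J 0)
    (hsq : ∀ w : W, ∀ p : V × W, J w (J w p) = -p)
    (h0 : ∀ (v : V) (w' : W), J 0 (v, w') = (Jh v, (Complex.I : ℂ) • w'))
    (B : W → V → W)
    (hB : ∀ (u : W) (v : V), B u v = (fderiv ℝ J 0 u (v, 0)).2) :
    (∀ (u : W) (v : V), B u (Jh v) = -((Complex.I : ℂ) • B u v)) ∧
    (∀ (u : W) (v : V) (w' : W),
      (fun p : V × W => (Jh p.1, B u p.1 + (Complex.I : ℂ) • p.2))
        ((fun p : V × W => (Jh p.1, B u p.1 + (Complex.I : ℂ) • p.2)) (v, w'))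
      = -(v, w')) := by
  have hJ0 : J 0 = Jh.prodMap (I • (1 : W →L[ℝ] W)) :=
    ContinuousLinearMap.ext fun p => h0 p.1 p.2
  have hJJ : ∀ᶠ w in 𝓝 0, J w * J w = -1 := .of_forall fun w => ContinuousLinearMap.ext (hsq w)
  have limit := rescaled_limit_is_almost_complex_general hdiff.hasFDerivAt hJJ hJ0
  obtain rfl : B = fun u => ⇑(lowerLeftBlock (fderiv ℝ J 0 u)) := funext₂ hB
  exact ⟨fun u v => congr($((limit u).1) v), fun u v w' => congr($((limit u).2) (v, w'))⟩
end
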